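/- Let G be a graph whose complement Ḡ is connected, triangle-free and has diameter 3. Then G is connected and pc_{1,2}(G) ≤ 3. -/

import Mathlib

open SimpleGraph

/-- A walk is *distance `ℓ`-proper* with respect to an edge-coloring `c` if any two
edges whose positions along the walk differ by at most `ℓ` receive distinct colors
(equivalently, no two edges of the same color appear with fewer than `ℓ` edges in
between on the walk). -/
def SimpleGraph.Walk.IsDistProper {V : Type*} {G : SimpleGraph V} {u v : V}
    (ℓ : ℕ) (c : Sym2 V → ℕ) (p : G.Walk u v) : Prop :=
  ∀ (i j : ℕ) (hi : i < p.edges.length) (hj : j < p.edges.length),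
    i < j → j ≤ i + ℓ → c (p.edges[i]'hi) ≠ c (p.edges[j]'hj)

/-- `c` is a `(1,ℓ)`-proper-path coloring of `G` using at most `k` colors
(the colors of edges of `G` lie in `{0, …, k-1}`): every pair of distinct vertices
is joined by a distance `ℓ`-proper path. -/
def SimpleGraph.IsPCColoring {V : Type*} (G : SimpleGraph V) (ℓ k : ℕ)
    (c : Sym2 V → ℕ) : Prop :=
  (∀ e ∈ G.edgeSet, c e < k) ∧
  ∀ u v : V, u ≠ v → ∃ p : G.Walk u v, p.IsPath ∧ p.IsDistProper ℓ c

/-- The `(1,ℓ)`-proper connection number `pc_{1,ℓ}(G)`: the minimum number of colors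
in an edge-coloring of `G` such that every pair of distinct vertices is connected by
a distance `ℓ`-proper path. -/
noncomputable def SimpleGraph.pc {V : Type*} (G : SimpleGraph V) (ℓ : ℕ) : ℕ :=
  sInf {k | ∃ c : Sym2 V → ℕ, G.IsPCColoring ℓ k c}

namespace PCAux

/-- Joined by a distance 2-proper path. -/
def Joined {V : Type*} (G : SimpleGraph V) (c : Sym2 V → ℕ) (u v : V) : Prop :=
  ∃ p : G.Walk u v, p.IsPath ∧ p.IsDistProper 2 c

lemma Joined.symm {V : Type*} {G : SimpleGraph V} {c : Sym2 V → ℕ} {u v : V}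
    (h : Joined G c u v) : Joined G c v u := by
  obtain ⟨p, hp, hd⟩ := h
  refine ⟨p.reverse, hp.reverse, ?_⟩
  intro i j hi hj hij hji
  have hl : p.reverse.edges.length = p.edges.length := by simp
  have := hd (p.edges.length - 1 - j) (p.edges.length - 1 - i) (by omega) (by omega)
    (by omega) (by omega)
  simp only [SimpleGraph.Walk.edges_reverse, List.getElem_reverse]
  exact this.symm

lemma joined1 {V : Type*} {G : SimpleGraph V} {c : Sym2 V → ℕ} {u v : V}
    (h : G.Adj u v) : Joined G c u v := by
  refine ⟨.cons h .nil, ?_, ?_⟩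
  · simp [SimpleGraph.Walk.isPath_def, h.ne]
  · intro i j hi hj hij hji
    simp at hi hj
    omega

lemma joined2 {V : Type*} {G : SimpleGraph V} {c : Sym2 V → ℕ} {u a v : V}
    (h : G.Adj u a) (h' : G.Adj a v) (huv : u ≠ v) (hc : c s(u, a) ≠ c s(a, v)) :
    Joined G c u v := by
  refine ⟨.cons h (.cons h' .nil), ?_, ?_⟩
  · simp [SimpleGraph.Walk.isPath_def, h.ne, h'.ne, huv]
  · intro i j hi hj hij hji
    simp at hi hj
    obtain ⟨rfl, rfl⟩ : i = 0 ∧ j = 1 := by omega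
    simpa using hc

lemma joined3 {V : Type*} {G : SimpleGraph V} {c : Sym2 V → ℕ} {u a b v : V}
    (h1 : G.Adj u a) (h2 : G.Adj a b) (h3 : G.Adj b v)
    (hub : u ≠ b) (huv : u ≠ v) (hav : a ≠ v)
    (c1 : c s(u, a) ≠ c s(a, b)) (c2 : c s(u, a) ≠ c s(b, v)) (c3 : c s(a, b) ≠ c s(b, v)) :
    Joined G c u v := by
  refine ⟨.cons h1 (.cons h2 (.cons h3 .nil)), ?_, ?_⟩
  · simp [SimpleGraph.Walk.isPath_def, h1.ne, h2.ne, h3.ne, huv, hub, hav]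
  · intro i j hi hj hij hji
    simp at hi hj
    have : (i = 0 ∧ j = 1) ∨ (i = 0 ∧ j = 2) ∨ (i = 1 ∧ j = 2) := by omega
    rcases this with ⟨rfl, rfl⟩ | ⟨rfl, rfl⟩ | ⟨rfl, rfl⟩
    · simpa using c1
    · simpa using c2
    · simpa using c3

lemma joined4 {V : Type*} {G : SimpleGraph V} {c : Sym2 V → ℕ} {u a b d v : V}
    (h1 : G.Adj u a) (h2 : G.Adj a b) (h3 : G.Adj b d) (h4 : G.Adj d v)
    (hub : u ≠ b) (hud : u ≠ d) (huv : u ≠ v) (had : a ≠ d) (hav : a ≠ v) (hbv : b ≠ v)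
    (c1 : c s(u, a) ≠ c s(a, b)) (c2 : c s(u, a) ≠ c s(b, d)) (c3 : c s(a, b) ≠ c s(b, d))
    (c4 : c s(a, b) ≠ c s(d, v)) (c5 : c s(b, d) ≠ c s(d, v)) :
    Joined G c u v := by
  refine ⟨.cons h1 (.cons h2 (.cons h3 (.cons h4 .nil))), ?_, ?_⟩
  · simp [SimpleGraph.Walk.isPath_def, h1.ne, h2.ne, h3.ne, h4.ne, huv, hub, hav, hud, had, hbv]
  · intro i j hi hj hij hji
    simp at hi hj
    have : (i = 0 ∧ j = 1) ∨ (i = 0 ∧ j = 2) ∨ (i = 1 ∧ j = 2) ∨ (i = 1 ∧ j = 3) ∨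
      (i = 2 ∧ j = 3) := by omega
    rcases this with ⟨rfl, rfl⟩ | ⟨rfl, rfl⟩ | ⟨rfl, rfl⟩ | ⟨rfl, rfl⟩ | ⟨rfl, rfl⟩
    · simpa using c1
    · simpa using c2
    · simpa using c3
    · simpa using c4
    · simpa using c5

/-- color by layers -/
def col (n : ℕ) : ℕ := if n = 9 then 0 else if n = 10 ∨ n = 13 then 1 else 2

/-- the edge coloring induced by a layer function -/
def colE {V : Type*} (l : V → ℕ) : Sym2 V → ℕ :=
  Sym2.lift ⟨fun u v => col (l u ^ 2 + l v ^ 2), fun u v => by simp only [add_comm]⟩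

lemma colE_mk {V : Type*} (l : V → ℕ) (u v : V) :
    colE l s(u, v) = col (l u ^ 2 + l v ^ 2) := rfl

lemma exists_pred {V : Type*} {H : SimpleGraph V} (hc : H.Connected) (x v : V) (n : ℕ)
    (h : H.dist x v = n + 1) : ∃ u, H.Adj u v ∧ H.dist x u = n := by
  obtain ⟨p, hp⟩ := hc.exists_walk_length_eq_dist v x
  rw [SimpleGraph.dist_comm, h] at hp
  cases p with
  | nil => simp at hp
  | cons hadj q =>
    rename_i w
    refine ⟨w, hadj.symm, ?_⟩
    have h1 := SimpleGraph.dist_le q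
    have h2 := hc.dist_triangle (u := x) (v := w) (w := v)
    rw [(SimpleGraph.dist_eq_one_iff_adj).2 hadj.symm] at h2
    rw [SimpleGraph.dist_comm] at h1
    simp at hp
    omega

lemma main {V : Type*} [Fintype V]
    (G : SimpleGraph V) (hc : Gᶜ.Connected) (htf : Gᶜ.CliqueFree 3)
    (hdiam : Gᶜ.diam = 3) : ∃ c : Sym2 V → ℕ, G.IsPCColoring 2 3 c := by
  classical
  have := hc.nonempty
  have tri : ∀ a b d, Gᶜ.Adj a b → Gᶜ.Adj b d → Gᶜ.Adj a d → False := fun a b d h1 h2 h3 =>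
    htf {a, b, d} (SimpleGraph.is3Clique_triple_iff.2 ⟨h1, h3, h2⟩)
  obtain ⟨x, z, hxz⟩ := Gᶜ.exists_dist_eq_diam
  rw [hdiam] at hxz
  obtain ⟨l, hl⟩ : ∃ l : V → ℕ, ∀ v, l v = Gᶜ.dist x v := ⟨_, fun _ => rfl⟩
  have hlx : l x = 0 := by rw [hl]; simp
  have hlz : l z = 3 := by rw [hl]; exact hxz
  have hle : ∀ v, l v ≤ 3 := fun v => by
    rw [hl, ← hdiam]
    exact SimpleGraph.dist_le_diam (SimpleGraph.ediam_ne_top_of_diam_ne_zero (by omega))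
  have hl0 : ∀ v, l v = 0 → v = x := fun v h => by
    rw [hl] at h
    exact (hc.dist_eq_zero_iff.1 h).symm
  have hadj : ∀ u v, Gᶜ.Adj u v → l v ≤ l u + 1 := fun u v h => by
    have h2 := hc.dist_triangle (u := x) (v := u) (w := v)
    rw [(SimpleGraph.dist_eq_one_iff_adj).2 h] at h2
    rw [hl, hl]; exact h2
  have hG : ∀ u v, u ≠ v → ¬ Gᶜ.Adj u v → G.Adj u v := fun u v h1 h2 => by
    by_contra h
    exact h2 ((SimpleGraph.compl_adj _ _ _).2 ⟨h1, h⟩)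
  have hpred : ∀ v n, l v = n + 1 → ∃ u, Gᶜ.Adj u v ∧ l u = n := fun v n h => by
    obtain ⟨u, h1, h2⟩ := exists_pred hc x v n (by rw [← hl]; exact h)
    exact ⟨u, h1, by rw [hl]; exact h2⟩
  have hfar : ∀ u v, l u + 2 ≤ l v → G.Adj u v := fun u v h => by
    apply hG
    · rintro rfl; omega
    · intro h'; have := hadj _ _ h'; omega
  have hne : ∀ u v, l u ≠ l v → u ≠ v := by rintro u v h rfl; exact h rfl
  refine ⟨colE l, ?_, ?_⟩
  · intro e _
    induction e using Sym2.ind with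
    | _ u v => rw [colE_mk]; unfold col; split_ifs <;> omega
  clear hl
  have key : ∀ u v, u ≠ v → l u ≤ l v → Joined G (colE l) u v := by
    intro u v huv hluv
    by_cases hA : G.Adj u v
    · exact joined1 hA
    have hH : Gᶜ.Adj u v := (SimpleGraph.compl_adj _ _ _).2 ⟨huv, hA⟩
    have h1 := hadj _ _ hH
    have h2 := hle v
    have hcases : (l u = 0 ∧ l v = 0) ∨ (l u = 0 ∧ l v = 1) ∨ (l u = 1 ∧ l v = 1) ∨
      (l u = 1 ∧ l v = 2) ∨ (l u = 2 ∧ l v = 2) ∨ (l u = 2 ∧ l v = 3) ∨ (l u = 3 ∧ l v = 3) := by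
      omega
    rcases hcases with ⟨hu, hv⟩ | ⟨hu, hv⟩ | ⟨hu, hv⟩ | ⟨hu, hv⟩ | ⟨hu, hv⟩ | ⟨hu, hv⟩ | ⟨hu, hv⟩
    · exact absurd ((hl0 u hu).trans (hl0 v hv).symm) huv
    · refine joined2 (a := z) (hfar _ _ (by omega)) (hfar _ _ (by omega)).symm huv ?_
      simp [colE_mk, col, *]
    · exfalso
      obtain ⟨a, ha, ha0⟩ := hpred u 0 hu
      obtain ⟨b, hb, hb0⟩ := hpred v 0 hv
      obtain rfl := hl0 a ha0
      obtain rfl := hl0 b hb0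
      exact tri _ _ _ ha hH hb
    · refine joined3 (a := z) (b := x) (hfar _ _ (by omega)) (hfar _ _ (by omega)).symm
        (hfar _ _ (by omega)) (hne _ _ (by omega)) huv (hne _ _ (by omega)) ?_ ?_ ?_ <;>
      simp [colE_mk, col, *]
    · obtain ⟨a, ha, ha0⟩ := hpred u 1 hu
      have hav : G.Adj a v := hG _ _ (hne _ _ (by omega)) (fun h => tri _ _ _ ha hH h)
      refine joined4 (a := x) (b := z) (d := a) (hfar _ _ (by omega)).symm (hfar _ _ (by omega))
        (hfar _ _ (by omega)).symm hav (hne _ _ (by omega)) (hne _ _ (by omega)) huv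
        (hne _ _ (by omega)) (hne _ _ (by omega)) (hne _ _ (by omega)) ?_ ?_ ?_ ?_ ?_ <;>
      simp [colE_mk, col, *]
    · refine joined2 (a := x) (hfar _ _ (by omega)).symm (hfar _ _ (by omega)) huv ?_
      simp [colE_mk, col, *]
    · obtain ⟨b, hb, hb0⟩ := hpred u 2 hu
      have hbv : G.Adj b v := hG _ _ (hne _ _ (by omega)) (fun h => tri _ _ _ hb hH h)
      refine joined3 (a := x) (b := b) (hfar _ _ (by omega)).symm (hfar _ _ (by omega))
        hbv (hne _ _ (by omega)) huv (hne _ _ (by omega)) ?_ ?_ ?_ <;>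
      simp [colE_mk, col, *]
  intro u v huv
  rcases le_total (l u) (l v) with h | h
  · exact key u v huv h
  · exact (key v u huv.symm h).symm

end PCAux

/-- If the complement of `G` is connected, triangle-free and has diameter `3`,
then `G` is connected and `pc_{1,2}(G) ≤ 3`. -/
theorem pc_le_three_of_compl_triangleFree_diam_three {V : Type*} [Fintype V]
    (G : SimpleGraph V) (hc : Gᶜ.Connected) (htf : Gᶜ.CliqueFree 3)
    (hdiam : Gᶜ.diam = 3) :
    G.Connected ∧ G.pc 2 ≤ 3 := by
  obtain ⟨c, h⟩ := PCAux.main G hc htf hdiam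
  have := hc.nonempty
  refine ⟨⟨fun u v => ?_⟩, Nat.sInf_le ⟨c, h⟩⟩
  by_cases huv : u = v
  · subst huv; exact SimpleGraph.Reachable.refl _
  · obtain ⟨p, _⟩ := h.2 u v huv
    exact ⟨p⟩
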